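/- Let 0 < θ_1, θ_2, θ_3, θ_4 ≤ π/4, let θ := min{θ_1,θ_2,θ_3,θ_4}, and let C := 6(1 + 6√2 + 2√(3(6+√2))) (so C ≤ 114). Then the rotated domino basis S_3(θ_1,θ_2,θ_3,θ_4) is (C/sin 2θ)-rigid: for all positive semidefinite a, b ∈ M_3(ℂ) with ⟨ψ_i, (a⊗b) ψ_i⟩ ≠ 0 for each of the nine rotated domino states ψ_i, one has ‖(a⊗b)/tr(a⊗b) − I/9‖_max ≤ (C/sin 2θ)·δ, where δ is the disturbance of a⊗b on S_3(θ_1,θ_2,θ_3,θ_4). -/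

import Mathlib

open Matrix Kronecker
open scoped ComplexOrder

/-- The disturbance `δ` of the product operator `a ⊗ b` on the family of states `ψ`. -/
noncomputable def disturbance {n dA dB : ℕ} (ψ : Fin n → Fin dA × Fin dB → ℂ)
    (a : Matrix (Fin dA) (Fin dA) ℂ) (b : Matrix (Fin dB) (Fin dB) ℂ) : ℝ :=
  ⨆ p : {q : Fin n × Fin n // q.1 ≠ q.2},
    ‖star (ψ p.1.1) ⬝ᵥ (a ⊗ₖ b).mulVec (ψ p.1.2)‖ /
      Real.sqrt ((star (ψ p.1.1) ⬝ᵥ (a ⊗ₖ b).mulVec (ψ p.1.1)).re *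
        (star (ψ p.1.2) ⬝ᵥ (a ⊗ₖ b).mulVec (ψ p.1.2)).re)

/-- The standard basis vector `|i⟩` of `ℂ³`. -/
noncomputable def e3 (i : Fin 3) : Fin 3 → ℂ := fun k => if k = i then 1 else 0

/-- The product vector `α ⊗ β` in `ℂ³ ⊗ ℂ³`. -/
noncomputable def kp (α β : Fin 3 → ℂ) : Fin 3 × Fin 3 → ℂ := fun p => α p.1 * β p.2

/-- The nine rotated domino states `S₃(θ₁,θ₂,θ₃,θ₄)` in `ℂ³ ⊗ ℂ³`. -/
noncomputable def rotDomino (t1 t2 t3 t4 : ℝ) : Fin 9 → Fin 3 × Fin 3 → ℂ :=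
  ![kp (e3 1) (e3 1),
    kp (e3 0) (fun k => (Real.cos t1 : ℂ) * e3 0 k + (Real.sin t1 : ℂ) * e3 1 k),
    kp (e3 0) (fun k => -(Real.sin t1 : ℂ) * e3 0 k + (Real.cos t1 : ℂ) * e3 1 k),
    kp (e3 2) (fun k => (Real.cos t2 : ℂ) * e3 1 k + (Real.sin t2 : ℂ) * e3 2 k),
    kp (e3 2) (fun k => -(Real.sin t2 : ℂ) * e3 1 k + (Real.cos t2 : ℂ) * e3 2 k),
    kp (fun k => (Real.cos t3 : ℂ) * e3 1 k + (Real.sin t3 : ℂ) * e3 2 k) (e3 0),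
    kp (fun k => -(Real.sin t3 : ℂ) * e3 1 k + (Real.cos t3 : ℂ) * e3 2 k) (e3 0),
    kp (fun k => (Real.cos t4 : ℂ) * e3 0 k + (Real.sin t4 : ℂ) * e3 1 k) (e3 2),
    kp (fun k => -(Real.sin t4 : ℂ) * e3 0 k + (Real.cos t4 : ℂ) * e3 1 k) (e3 2)]

/-- The largest absolute value of an entry of a matrix. -/
noncomputable def maxEntry {m n : Type*} [Fintype m] [Fintype n] (M : Matrix m n ℂ) : ℝ :=
  ⨆ p : m × n, ‖M p.1 p.2‖

/-!
The states of each domino form an orthonormal basis of the span of its cells, so between two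
dominoes the change of basis preserves the Frobenius norm: small overlaps of the states bound every
entry of the corresponding block of `a ⊗ b`. Inside a domino, the overlap of its two states controls
`sin 2θ` times the difference of the two diagonal entries, up to the coherence between its cells.
That coherence is an entry of `a` or of `b`, and the pinwheel arrangement makes the same entry
appear in the block between the central cell and another domino.

Normalised by `a 1 1 = b 1 1 = 1`, this gives four inequalities, arranged in a cycle, for the other
diagonal entries. If `18 δ ≤ sin 2θ`, the inequality at the largest entry bounds all of them by
`4 / 3`, and then `a` and `b` are both close to the identity. Otherwise the claim is weaker than the
bound `1`, which holds for every positive semidefinite matrix of nonzero trace.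
-/

section Trace

variable {n 𝕜 : Type*} [Fintype n]

lemma inv_trace_smul_smul [Field 𝕜] {c : 𝕜} (hc : c ≠ 0) (M : Matrix n n 𝕜) :
    (c • M).trace⁻¹ • (c • M) = M.trace⁻¹ • M := by
  rw [trace_smul, smul_eq_mul, mul_inv, smul_smul, mul_right_comm, inv_mul_cancel₀ hc, one_mul]

lemma trace_ne_zero_of_posSemidef [RCLike 𝕜] {M : Matrix n n 𝕜} (hM : M.PosSemidef) {i : n}
    (hi : M i i ≠ 0) : M.trace ≠ 0 := fun h => by
  simp [hM.trace_eq_zero_iff.mp h] at hi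

end Trace

section ElementwiseNorm

open scoped Matrix.Norms.Elementwise

variable {m n 𝕜 : Type*} [RCLike 𝕜]

lemma norm_apply_sq_le_of_posSemidef {M : Matrix n n 𝕜} (hM : M.PosSemidef) (i j : n) :
    ‖M i j‖ ^ 2 ≤ ‖M i i‖ * ‖M j j‖ := by
  have hdet : 0 ≤ (M.submatrix ![i, j] ![i, j]).det := (hM.submatrix ![i, j]).det_nonneg
  rw [det_fin_two] at hdet
  simp only [submatrix_apply, cons_val_zero, cons_val_one] at hdet
  rw [← hM.1.apply j i, RCLike.star_def, RCLike.mul_conj,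
    ← RCLike.norm_of_nonneg' (hM.diag_nonneg (i := i)),
    ← RCLike.norm_of_nonneg' (hM.diag_nonneg (i := j))] at hdet
  exact sub_nonneg.mp (by exact_mod_cast hdet)

variable [Fintype m] [Fintype n]

lemma maxEntry_eq_norm (M : Matrix m n ℂ) : maxEntry M = ‖M‖ :=
  le_antisymm (Real.iSup_le (fun _ => M.norm_entry_le_entrywise_sup_norm) (norm_nonneg _))
    ((Matrix.norm_le_iff (Real.iSup_nonneg fun _ => norm_nonneg _)).mpr fun i j =>
      le_ciSup (f := fun p : m × n => ‖M p.1 p.2‖) (Set.finite_range _).bddAbove (i, j))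

lemma norm_le_norm_trace_of_posSemidef {M : Matrix n n 𝕜} (hM : M.PosSemidef) :
    ‖M‖ ≤ ‖M.trace‖ := by
  have hdiag (i : n) : ‖M i i‖ ≤ ‖M.trace‖ := by
    have hle : M i i ≤ M.trace :=
      Finset.single_le_sum (f := fun k => M k k) (fun _ _ => hM.diag_nonneg) (Finset.mem_univ i)
    rw [← RCLike.norm_of_nonneg' hM.diag_nonneg, ← RCLike.norm_of_nonneg' hM.trace_nonneg] at hle
    exact_mod_cast hle
  refine (Matrix.norm_le_iff (norm_nonneg _)).mpr fun i j => ?_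
  refine (sq_le_sq₀ (norm_nonneg _) (norm_nonneg _)).mp ?_
  calc ‖M i j‖ ^ 2 ≤ ‖M i i‖ * ‖M j j‖ := norm_apply_sq_le_of_posSemidef hM i j
    _ ≤ ‖M.trace‖ * ‖M.trace‖ := by gcongr <;> exact hdiag _
    _ = ‖M.trace‖ ^ 2 := (sq _).symm

lemma norm_kronecker_le (A : Matrix m m 𝕜) (B : Matrix n n 𝕜) : ‖A ⊗ₖ B‖ ≤ ‖A‖ * ‖B‖ :=
  (Matrix.norm_le_iff (by positivity)).mpr fun p q => by
    rw [kroneckerMap_apply, norm_mul]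
    gcongr <;> exact Matrix.norm_entry_le_entrywise_sup_norm _

lemma norm_le_of_isHermitian [LinearOrder n] {M : Matrix n n 𝕜} (hM : M.IsHermitian) {η : ℝ}
    (hη : 0 ≤ η) (h : ∀ i j, i ≤ j → ‖M i j‖ ≤ η) : ‖M‖ ≤ η := by
  refine (Matrix.norm_le_iff hη).mpr fun i j => ?_
  obtain hij | hji := le_total i j
  · exact h i j hij
  · rw [← hM.apply, norm_star]
    exact h j i hji

variable [DecidableEq m] [DecidableEq n]

lemma norm_inv_trace_smul_sub_smul_one_le_one {M : Matrix n n 𝕜} (hM : M.PosSemidef)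
    (htr : M.trace ≠ 0) {c : ℝ} (hc₀ : 0 ≤ c) (hc₁ : c ≤ 1) :
    ‖M.trace⁻¹ • M - (c : 𝕜) • (1 : Matrix n n 𝕜)‖ ≤ 1 := by
  set N := M.trace⁻¹ • M
  have hN : N.PosSemidef := hM.smul (inv_nonneg_of_nonneg hM.trace_nonneg)
  have hN_tr : N.trace = 1 := by rw [trace_smul, smul_eq_mul, inv_mul_cancel₀ htr]
  have hentry (i j : n) : ‖N i j‖ ≤ 1 := by
    simpa [hN_tr] using
      N.norm_entry_le_entrywise_sup_norm.trans (norm_le_norm_trace_of_posSemidef hN)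
  refine (Matrix.norm_le_iff zero_le_one).mpr fun i j => ?_
  obtain rfl | hij := eq_or_ne i j
  · rw [Matrix.sub_apply, Matrix.smul_apply, one_apply_eq, smul_eq_mul, mul_one,
      ← RCLike.norm_of_nonneg' (hN.diag_nonneg (i := i)), ← RCLike.ofReal_sub, RCLike.norm_ofReal]
    exact abs_sub_le_of_nonneg_of_le (norm_nonneg _) (hentry i i) hc₀ hc₁
  · simpa [hij] using hentry i j

lemma norm_one_le : ‖(1 : Matrix n n 𝕜)‖ ≤ 1 :=
  (Matrix.norm_le_iff zero_le_one).mpr fun i j => by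
    rw [one_apply]; split_ifs <;> simp

lemma norm_trace_sub_card_le (A : Matrix n n 𝕜) :
    ‖A.trace - (Fintype.card n : 𝕜)‖ ≤ Fintype.card n * ‖A - 1‖ := by
  calc ‖A.trace - (Fintype.card n : 𝕜)‖ = ‖∑ i, (A - 1) i i‖ := by
        rw [← trace_one (n := n), ← trace_sub]; rfl
    _ ≤ ∑ _i : n, ‖A - 1‖ :=
        norm_sum_le_of_le _ fun _ _ => (A - 1).norm_entry_le_entrywise_sup_norm
    _ = Fintype.card n * ‖A - 1‖ := by simp

lemma norm_inv_trace_smul_sub_le [Nonempty n] {A : Matrix n n 𝕜} {η : ℝ} (hη : η < 1)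
    (h : ‖A - 1‖ ≤ η) :
    ‖A.trace⁻¹ • A - (Fintype.card n : 𝕜)⁻¹ • (1 : Matrix n n 𝕜)‖ ≤
      2 * η / (Fintype.card n * (1 - η)) := by
  set N := Fintype.card n
  have hN : (0 : ℝ) < N := by exact_mod_cast Fintype.card_pos
  have htr : ‖A.trace - (N : 𝕜)‖ ≤ N * η := (norm_trace_sub_card_le A).trans (by gcongr)
  have htr_ge : N * (1 - η) ≤ ‖A.trace‖ := by
    have := norm_le_norm_add_norm_sub' (N : 𝕜) A.trace
    rw [RCLike.norm_natCast, norm_sub_rev] at this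
    linarith
  have hpos : 0 < N * (1 - η) := mul_pos hN (sub_pos.mpr hη)
  have htr_ne : A.trace ≠ 0 := norm_pos_iff.mp (hpos.trans_le htr_ge)
  have hsplit : A.trace⁻¹ • A - (N : 𝕜)⁻¹ • (1 : Matrix n n 𝕜) =
      A.trace⁻¹ • ((A - 1) - ((A.trace - N) / N) • 1) := by
    have hN' : (N : 𝕜) ≠ 0 := by exact_mod_cast hN.ne'
    ext i j
    simp only [Matrix.sub_apply, Matrix.smul_apply, smul_eq_mul]
    field_simp
    ring
  have hscalar : ‖((A.trace - N) / N) • (1 : Matrix n n 𝕜)‖ ≤ η := by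
    rw [norm_smul, norm_div, RCLike.norm_natCast]
    refine (mul_le_of_le_one_right (by positivity) norm_one_le).trans ?_
    rwa [div_le_iff₀' hN]
  rw [hsplit, norm_smul, norm_inv, inv_mul_eq_div]
  exact div_le_div₀ (by linarith [norm_nonneg (A - 1)])
    ((norm_sub_le _ _).trans (by linarith)) hpos htr_ge

lemma norm_kronecker_sub_smul_one_le (A : Matrix m m 𝕜) (B : Matrix n n 𝕜) (c c' : 𝕜) :
    ‖A ⊗ₖ B - (c * c') • (1 : Matrix (m × n) (m × n) 𝕜)‖ ≤
      ‖A - c • (1 : Matrix m m 𝕜)‖ * ‖B‖ + ‖c‖ * ‖B - c' • (1 : Matrix n n 𝕜)‖ := by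
  have hsplit : A ⊗ₖ B - (c * c') • (1 : Matrix (m × n) (m × n) 𝕜) =
      (A - c • 1) ⊗ₖ B + c • ((1 : Matrix m m 𝕜) ⊗ₖ (B - c' • (1 : Matrix n n 𝕜))) := by
    rw [← one_kronecker_one]
    ext p q
    simp only [Matrix.sub_apply, Matrix.add_apply, Matrix.smul_apply, kroneckerMap_apply,
      smul_eq_mul]
    ring
  calc _ = ‖(A - c • 1) ⊗ₖ B + c • ((1 : Matrix m m 𝕜) ⊗ₖ (B - c' • (1 : Matrix n n 𝕜)))‖ := by
        rw [hsplit]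
    _ ≤ ‖A - c • (1 : Matrix m m 𝕜)‖ * ‖B‖ + ‖c‖ * (1 * ‖B - c' • (1 : Matrix n n 𝕜)‖) := by
        grw [norm_add_le, norm_smul, norm_kronecker_le, norm_kronecker_le, norm_one_le]
    _ = _ := by rw [one_mul]

lemma norm_inv_trace_smul_kronecker_sub_le [Nonempty m] [Nonempty n] {A : Matrix m m 𝕜}
    {B : Matrix n n 𝕜} (hB : B.PosSemidef) {η : ℝ} (hη : η < 1) (hA₁ : ‖A - 1‖ ≤ η)
    (hB₁ : ‖B - 1‖ ≤ η) :
    ‖(A ⊗ₖ B).trace⁻¹ • (A ⊗ₖ B) -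
        ((Fintype.card m : 𝕜)⁻¹ * (Fintype.card n : 𝕜)⁻¹) • (1 : Matrix (m × n) (m × n) 𝕜)‖ ≤
      2 * η / (Fintype.card m * (1 - η)) +
        (Fintype.card m : ℝ)⁻¹ * (2 * η / (Fintype.card n * (1 - η))) := by
  have hfactor : (A ⊗ₖ B).trace⁻¹ • (A ⊗ₖ B) = (A.trace⁻¹ • A) ⊗ₖ (B.trace⁻¹ • B) := by
    rw [trace_kronecker, smul_kronecker, kronecker_smul, smul_smul, mul_inv]
  have hB_le : ‖B.trace⁻¹ • B‖ ≤ 1 := by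
    rw [norm_smul, norm_inv]
    exact inv_mul_le_one_of_le₀ (norm_le_norm_trace_of_posSemidef hB) (norm_nonneg _)
  have hbound : 0 ≤ 2 * η / (Fintype.card m * (1 - η)) :=
    (norm_nonneg _).trans (norm_inv_trace_smul_sub_le hη hA₁)
  rw [hfactor]
  grw [norm_kronecker_sub_smul_one_le, norm_inv_trace_smul_sub_le hη hA₁,
    norm_inv_trace_smul_sub_le hη hB₁, hB_le, norm_inv, RCLike.norm_natCast, mul_one]

end ElementwiseNorm

section Compression

variable {ι κ : Type*} [Fintype ι] {M : Matrix ι ι ℂ} {ψ : κ → ι → ℂ}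

/-- The matrix of the sesquilinear form `⟨x, M y⟩` on a family `ψ` of states. -/
def compression (ψ : κ → ι → ℂ) (M : Matrix ι ι ℂ) : Matrix κ κ ℂ :=
  of fun i j => star (ψ i) ⬝ᵥ M *ᵥ ψ j

/-- The measurement operator `M` disturbs the family `ψ` by at most `d`. Each inequality is squared
and cleared of denominators, so states on which `M` vanishes are allowed. -/
def DisturbanceLE (ψ : κ → ι → ℂ) (M : Matrix ι ι ℂ) (d : ℝ) : Prop :=
  ∀ i j, i ≠ j →
    ‖compression ψ M i j‖ ^ 2 ≤ d ^ 2 * (‖compression ψ M i i‖ * ‖compression ψ M j j‖)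

lemma compression_smul (c : ℂ) (ψ : κ → ι → ℂ) (M : Matrix ι ι ℂ) :
    compression ψ (c • M) = c • compression ψ M := by
  ext i j
  simp [compression, smul_mulVec, dotProduct_smul]

lemma DisturbanceLE.smul {d : ℝ} (h : DisturbanceLE ψ M d) (c : ℂ) :
    DisturbanceLE ψ (c • M) d := fun i j hij => by
  simp only [compression_smul, Matrix.smul_apply, norm_smul, mul_pow]
  calc ‖c‖ ^ 2 * ‖compression ψ M i j‖ ^ 2
      ≤ ‖c‖ ^ 2 * (d ^ 2 * (‖compression ψ M i i‖ * ‖compression ψ M j j‖)) := by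
        gcongr; exact h i j hij
    _ = _ := by ring

lemma compression_apply_self_nonneg (hM : M.PosSemidef) (ψ : κ → ι → ℂ) (i : κ) :
    0 ≤ compression ψ M i i :=
  hM.dotProduct_mulVec_nonneg (ψ i)

lemma two_mul_norm_compression_le {i j : κ} (hij : i ≠ j) {d : ℝ} (hd₀ : 0 ≤ d)
    (hd : DisturbanceLE ψ M d) :
    2 * ‖compression ψ M i j‖ ≤ d * (‖compression ψ M i i‖ + ‖compression ψ M j j‖) := by
  refine abs_le_of_sq_le_sq' ?_ (by positivity) |>.2
  have := hd i j hij
  nlinarith [mul_nonneg (sq_nonneg d)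
    (sq_nonneg (‖compression ψ M i i‖ - ‖compression ψ M j j‖))]

end Compression

section Disturbance

variable {n dA dB : ℕ}

lemma disturbance_nonneg (ψ : Fin n → Fin dA × Fin dB → ℂ) (a : Matrix (Fin dA) (Fin dA) ℂ)
    (b : Matrix (Fin dB) (Fin dB) ℂ) : 0 ≤ disturbance ψ a b :=
  Real.iSup_nonneg fun _ => by positivity

lemma disturbanceLE_disturbance {ψ : Fin n → Fin dA × Fin dB → ℂ}
    {a : Matrix (Fin dA) (Fin dA) ℂ} {b : Matrix (Fin dB) (Fin dB) ℂ} (ha : a.PosSemidef)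
    (hb : b.PosSemidef) (hne : ∀ i, compression ψ (a ⊗ₖ b) i i ≠ 0) :
    DisturbanceLE ψ (a ⊗ₖ b) (disturbance ψ a b) := fun i j hij => by
  set G := compression ψ (a ⊗ₖ b)
  have hre (k : Fin n) : (G k k).re = ‖G k k‖ :=
    congrArg Complex.re (Complex.norm_of_nonneg'
      (compression_apply_self_nonneg (ha.kronecker hb) ψ k)).symm
  have hpos : 0 < ‖G i i‖ * ‖G j j‖ :=
    mul_pos (norm_pos_iff.mpr (hne i)) (norm_pos_iff.mpr (hne j))
  have hle : ‖G i j‖ / √((G i i).re * (G j j).re) ≤ disturbance ψ a b :=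
    le_ciSup (f := fun p : {q : Fin n × Fin n // q.1 ≠ q.2} =>
      ‖G p.1.1 p.1.2‖ / √((G p.1.1 p.1.1).re * (G p.1.2 p.1.2).re))
      (Set.finite_range _).bddAbove ⟨(i, j), hij⟩
  rw [hre, hre, div_le_iff₀ (Real.sqrt_pos.mpr hpos)] at hle
  calc ‖G i j‖ ^ 2 ≤ (disturbance ψ a b * √(‖G i i‖ * ‖G j j‖)) ^ 2 := by gcongr
    _ = disturbance ψ a b ^ 2 * (‖G i i‖ * ‖G j j‖) := by rw [mul_pow, Real.sq_sqrt hpos.le]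

end Disturbance

section Tiles

variable {ι κ : Type*} [DecidableEq ι]

/-- The unit vector `cos t |p⟩ + sin t |q⟩`. The state `-sin t |p⟩ + cos t |q⟩` orthogonal to it
in the same plane is encoded as the vector at angle `t + π / 2`. -/
noncomputable def rotated (t : ℝ) (p q : ι) : ι → ℂ :=
  (Real.cos t : ℂ) • Pi.single p 1 + (Real.sin t : ℂ) • Pi.single q 1

/-- The states indexed by `I` form an orthonormal basis of the coordinate subspace of the cells
`S`, expressed as equality of the two orthogonal projections. -/
def IsTile (ψ : κ → ι → ℂ) (I : Finset κ) (S : Finset ι) : Prop :=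
  ∑ i ∈ I, vecMulVec (ψ i) (star (ψ i)) = ∑ p ∈ S, Matrix.single p p 1

variable {ψ : κ → ι → ℂ} {I J : Finset κ} {S T : Finset ι}

lemma isTile_singleton {i : κ} {p : ι} (h : ψ i = Pi.single p 1) : IsTile ψ {i} {p} := by
  rw [IsTile, Finset.sum_singleton, Finset.sum_singleton, h, ← Pi.single_star, star_one,
    single_eq_single_vecMulVec_single]

lemma isTile_pair [DecidableEq κ] {i j : κ} {p q : ι} {t : ℝ} (hij : i ≠ j) (hpq : p ≠ q)
    (hi : ψ i = rotated t p q) (hj : ψ j = rotated (t + Real.pi / 2) p q) :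
    IsTile ψ {i, j} {p, q} := by
  have hcs : (Real.cos t : ℂ) ^ 2 + (Real.sin t : ℂ) ^ 2 = 1 := by
    exact_mod_cast Real.cos_sq_add_sin_sq t
  rw [IsTile, Finset.sum_pair hij, Finset.sum_pair hpq, hi, hj, rotated, rotated,
    Real.cos_add_pi_div_two, Real.sin_add_pi_div_two, single_eq_single_vecMulVec_single,
    single_eq_single_vecMulVec_single]
  simp only [star_add, star_smul, ← Pi.single_star, star_one, Complex.star_def, Complex.ofReal_neg,
    map_neg, Complex.conj_ofReal]
  ext k l
  simp only [Matrix.add_apply, vecMulVec_apply, Pi.add_apply, Pi.smul_apply, smul_eq_mul]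
  set x : ι → ℂ := Pi.single p 1
  set y : ι → ℂ := Pi.single q 1
  linear_combination (x k * x l + y k * y l) * hcs

variable [Fintype ι] {M : Matrix ι ι ℂ}

namespace IsTile

lemma sum_compression (h : IsTile ψ I S) (M : Matrix ι ι ℂ) :
    ∑ i ∈ I, compression ψ M i i = ∑ p ∈ S, M p p := by
  calc ∑ i ∈ I, compression ψ M i i = (M * ∑ i ∈ I, vecMulVec (ψ i) (star (ψ i))).trace := by
        simp only [compression, of_apply, Finset.mul_sum, mul_vecMulVec, trace_sum,
          trace_vecMulVec]
        exact Finset.sum_congr rfl fun i _ => dotProduct_comm _ _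
    _ = ∑ p ∈ S, M p p := by
        rw [h]
        simp only [Finset.mul_sum, trace_sum, trace_mul_single, MulOpposite.op_one, one_smul]

lemma sum_norm_compression (h : IsTile ψ I S) (hM : M.PosSemidef) :
    ∑ i ∈ I, ‖compression ψ M i i‖ = ∑ p ∈ S, ‖M p p‖ := by
  have hsum := h.sum_compression M
  rw [← Finset.sum_congr rfl fun i _ =>
      Complex.norm_of_nonneg' (compression_apply_self_nonneg hM ψ i),
    ← Finset.sum_congr rfl fun p _ => Complex.norm_of_nonneg' (hM.diag_nonneg (i := p))] at hsum
  exact_mod_cast hsum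

lemma exists_apply_ne_zero (h : IsTile ψ I S) (hM : M.PosSemidef) {i : κ} (hi : i ∈ I)
    (hne : compression ψ M i i ≠ 0) : ∃ p ∈ S, M p p ≠ 0 := by
  have hpos : 0 < ∑ p ∈ S, ‖M p p‖ := by
    rw [← h.sum_norm_compression hM]
    exact Finset.sum_pos' (fun _ _ => norm_nonneg _) ⟨i, hi, norm_pos_iff.mpr hne⟩
  obtain ⟨p, hp, hne⟩ := Finset.exists_ne_zero_of_sum_ne_zero hpos.ne'
  exact ⟨p, hp, norm_ne_zero_iff.mp hne⟩

lemma sum_norm_sq_dotProduct (h : IsTile ψ I S) (z : ι → ℂ) :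
    ∑ i ∈ I, ‖star (ψ i) ⬝ᵥ z‖ ^ 2 = ∑ p ∈ S, ‖z p‖ ^ 2 := by
  have hsum := h.sum_compression (vecMulVec z (star z))
  have hcomp (i : κ) : compression ψ (vecMulVec z (star z)) i i =
      ((‖star (ψ i) ⬝ᵥ z‖ ^ 2 : ℝ) : ℂ) := by
    rw [compression, of_apply, vecMulVec_mulVec, op_smul_eq_smul, dotProduct_smul, star_dotProduct,
      smul_eq_mul, Complex.star_def, Complex.conj_mul', Complex.ofReal_pow]
  have hdiag (p : ι) : vecMulVec z (star z) p p = ((‖z p‖ ^ 2 : ℝ) : ℂ) := by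
    rw [Complex.ofReal_pow, ← Complex.mul_conj', vecMulVec_apply]; rfl
  simp_rw [hcomp, hdiag] at hsum
  exact_mod_cast hsum

lemma sum_norm_sq_compression (hI : IsTile ψ I S) (hJ : IsTile ψ J T) (M : Matrix ι ι ℂ) :
    ∑ i ∈ I, ∑ j ∈ J, ‖compression ψ M i j‖ ^ 2 = ∑ p ∈ S, ∑ q ∈ T, ‖M p q‖ ^ 2 := by
  have hrow (p : ι) (j : κ) : ‖(M *ᵥ ψ j) p‖ = ‖star (ψ j) ⬝ᵥ star (M p)‖ := by
    rw [star_dotProduct_star, norm_star]; rfl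
  calc ∑ i ∈ I, ∑ j ∈ J, ‖compression ψ M i j‖ ^ 2
      = ∑ j ∈ J, ∑ p ∈ S, ‖(M *ᵥ ψ j) p‖ ^ 2 := by
        rw [Finset.sum_comm]
        exact Finset.sum_congr rfl fun j _ => hI.sum_norm_sq_dotProduct (M *ᵥ ψ j)
    _ = ∑ p ∈ S, ∑ j ∈ J, ‖star (ψ j) ⬝ᵥ star (M p)‖ ^ 2 := by
        rw [Finset.sum_comm]; simp_rw [hrow]
    _ = ∑ p ∈ S, ∑ q ∈ T, ‖M p q‖ ^ 2 := by
        simp [hJ.sum_norm_sq_dotProduct]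

lemma norm_apply_sq_le (hI : IsTile ψ I S) (hJ : IsTile ψ J T) (hIJ : Disjoint I J)
    (hM : M.PosSemidef) {d : ℝ} (hd : DisturbanceLE ψ M d) {p q : ι} (hp : p ∈ S) (hq : q ∈ T) :
    ‖M p q‖ ^ 2 ≤ d ^ 2 * ((∑ p ∈ S, ‖M p p‖) * ∑ q ∈ T, ‖M q q‖) := by
  calc ‖M p q‖ ^ 2 ≤ ∑ q ∈ T, ‖M p q‖ ^ 2 :=
        Finset.single_le_sum (f := fun q => ‖M p q‖ ^ 2) (fun _ _ => by positivity) hq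
    _ ≤ ∑ p ∈ S, ∑ q ∈ T, ‖M p q‖ ^ 2 :=
        Finset.single_le_sum (f := fun p => ∑ q ∈ T, ‖M p q‖ ^ 2) (fun _ _ => by positivity) hp
    _ = ∑ i ∈ I, ∑ j ∈ J, ‖compression ψ M i j‖ ^ 2 := (hI.sum_norm_sq_compression hJ M).symm
    _ ≤ ∑ i ∈ I, ∑ j ∈ J, d ^ 2 * (‖compression ψ M i i‖ * ‖compression ψ M j j‖) := by
        gcongr with i hi j hj
        exact hd i j (Finset.disjoint_left.mp hIJ hi <| · ▸ hj)
    _ = d ^ 2 * ((∑ i ∈ I, ‖compression ψ M i i‖) * ∑ j ∈ J, ‖compression ψ M j j‖) := by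
        rw [Finset.sum_mul_sum]; simp only [Finset.mul_sum]
    _ = d ^ 2 * ((∑ p ∈ S, ‖M p p‖) * ∑ q ∈ T, ‖M q q‖) := by
        rw [hI.sum_norm_compression hM, hJ.sum_norm_compression hM]

end IsTile

lemma star_rotated_dotProduct_mulVec_rotated (M : Matrix ι ι ℂ) (s t : ℝ) (p q : ι) :
    star (rotated s p q) ⬝ᵥ M *ᵥ rotated t p q =
      Real.cos s * Real.cos t * M p p + Real.cos s * Real.sin t * M p q +
        (Real.sin s * Real.cos t * M q p + Real.sin s * Real.sin t * M q q) := by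
  simp only [rotated, star_add, star_smul, ← Pi.single_star, star_one, mulVec_add, mulVec_smul,
    dotProduct_add, add_dotProduct, dotProduct_smul, smul_dotProduct, mulVec_single_one,
    single_one_dotProduct, col_apply, Complex.star_def, Complex.conj_ofReal, smul_eq_mul]
  ring

lemma abs_sin_two_mul_mul_norm_sub_le {i j : κ} {p q : ι} {t d : ℝ} (hij : i ≠ j)
    (hpq : p ≠ q) (hi : ψ i = rotated t p q) (hj : ψ j = rotated (t + Real.pi / 2) p q)
    (hM : M.PosSemidef) (hd₀ : 0 ≤ d) (hd : DisturbanceLE ψ M d) :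
    |Real.sin (2 * t)| * ‖M q q - M p p‖ ≤ d * (‖M p p‖ + ‖M q q‖) + 2 * ‖M p q‖ := by
  have hoff : 2 * ‖compression ψ M i j‖ ≤ d * (‖M p p‖ + ‖M q q‖) := by
    classical
    have hsum := (isTile_pair hij hpq hi hj).sum_norm_compression hM
    rw [Finset.sum_pair hij, Finset.sum_pair hpq] at hsum
    exact hsum ▸ two_mul_norm_compression_le hij hd₀ hd
  have hexpand : (Real.sin (2 * t) : ℂ) * (M q q - M p p) = 2 * compression ψ M i j +
      2 * (-(Real.cos t : ℂ) ^ 2 * M p q + (Real.sin t : ℂ) ^ 2 * M q p) := by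
    rw [compression, of_apply, hi, hj, star_rotated_dotProduct_mulVec_rotated,
      Real.cos_add_pi_div_two, Real.sin_add_pi_div_two, Real.sin_two_mul]
    push_cast
    ring
  have hsymm : ‖M q p‖ = ‖M p q‖ := by rw [← hM.1.apply q p, norm_star]
  have hcoh : ‖-(Real.cos t : ℂ) ^ 2 * M p q + (Real.sin t : ℂ) ^ 2 * M q p‖ ≤ ‖M p q‖ := by
    calc _ ≤ ‖-(Real.cos t : ℂ) ^ 2 * M p q‖ + ‖(Real.sin t : ℂ) ^ 2 * M q p‖ := norm_add_le _ _
      _ = Real.cos t ^ 2 * ‖M p q‖ + Real.sin t ^ 2 * ‖M p q‖ := by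
        simp only [norm_mul, norm_neg, norm_pow, Complex.norm_real, Real.norm_eq_abs, sq_abs,
          hsymm]
      _ = ‖M p q‖ := by rw [← add_mul, Real.cos_sq_add_sin_sq, one_mul]
  calc |Real.sin (2 * t)| * ‖M q q - M p p‖ = ‖(Real.sin (2 * t) : ℂ) * (M q q - M p p)‖ := by
        rw [norm_mul, Complex.norm_real, Real.norm_eq_abs]
    _ ≤ 2 * ‖compression ψ M i j‖ +
        2 * ‖-(Real.cos t : ℂ) ^ 2 * M p q + (Real.sin t : ℂ) ^ 2 * M q p‖ := by
        rw [hexpand]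
        refine (norm_add_le _ _).trans_eq ?_
        rw [norm_mul, norm_mul, Complex.norm_ofNat]
    _ ≤ d * (‖M p p‖ + ‖M q q‖) + 2 * ‖M p q‖ := by gcongr

lemma abs_sin_two_mul_mul_norm_sub_le_of_eq_mul {i j : κ} {p q : ι} {t d : ℝ} {c x y z : ℂ}
    (hij : i ≠ j) (hpq : p ≠ q) (hi : ψ i = rotated t p q)
    (hj : ψ j = rotated (t + Real.pi / 2) p q) (hM : M.PosSemidef)
    (hne : compression ψ M i i ≠ 0) (hx : M p p = c * x) (hy : M q q = c * y) (hz : M p q = c * z)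
    (hd₀ : 0 ≤ d) (hd : DisturbanceLE ψ M d) :
    |Real.sin (2 * t)| * ‖y - x‖ ≤ d * (‖x‖ + ‖y‖) + 2 * ‖z‖ := by
  have hc : 0 < ‖c‖ := norm_pos_iff.mpr fun hc => by
    classical
    obtain ⟨r, hr, hr_ne⟩ := (isTile_pair hij hpq hi hj).exists_apply_ne_zero hM
      (Finset.mem_insert_self i _) hne
    obtain rfl | rfl : r = p ∨ r = q := by simpa using hr
    · simp [hx, hc] at hr_ne
    · simp [hy, hc] at hr_ne
  have h := abs_sin_two_mul_mul_norm_sub_le hij hpq hi hj hM hd₀ hd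
  rw [hx, hy, hz, ← mul_sub, norm_mul, norm_mul, norm_mul, norm_mul] at h
  refine le_of_mul_le_mul_left ?_ hc
  linarith

end Tiles

section Kronecker

variable {α β κ : Type*} [Fintype α] [DecidableEq α] [Fintype β] [DecidableEq β]
  {ψ : κ → α × β → ℂ} {a : Matrix α α ℂ} {b : Matrix β β ℂ} {i j : κ} {t d : ℝ}

lemma abs_sin_two_mul_mul_norm_sub_le_right {r : α} {k l : β} (hij : i ≠ j) (hkl : k ≠ l)
    (hi : ψ i = rotated t (r, k) (r, l)) (hj : ψ j = rotated (t + Real.pi / 2) (r, k) (r, l))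
    (ha : a.PosSemidef) (hb : b.PosSemidef) (hne : compression ψ (a ⊗ₖ b) i i ≠ 0)
    (hd₀ : 0 ≤ d) (hd : DisturbanceLE ψ (a ⊗ₖ b) d) :
    |Real.sin (2 * t)| * ‖b l l - b k k‖ ≤ d * (‖b k k‖ + ‖b l l‖) + 2 * ‖b k l‖ :=
  abs_sin_two_mul_mul_norm_sub_le_of_eq_mul (c := a r r) hij
    (fun h => hkl (congrArg Prod.snd h)) hi hj (ha.kronecker hb) hne rfl rfl rfl hd₀ hd

lemma abs_sin_two_mul_mul_norm_sub_le_left {k l : α} {r : β} (hij : i ≠ j) (hkl : k ≠ l)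
    (hi : ψ i = rotated t (k, r) (l, r)) (hj : ψ j = rotated (t + Real.pi / 2) (k, r) (l, r))
    (ha : a.PosSemidef) (hb : b.PosSemidef) (hne : compression ψ (a ⊗ₖ b) i i ≠ 0)
    (hd₀ : 0 ≤ d) (hd : DisturbanceLE ψ (a ⊗ₖ b) d) :
    |Real.sin (2 * t)| * ‖a l l - a k k‖ ≤ d * (‖a k k‖ + ‖a l l‖) + 2 * ‖a k l‖ :=
  abs_sin_two_mul_mul_norm_sub_le_of_eq_mul (c := b r r) hij
    (fun h => hkl (congrArg Prod.fst h)) hi hj (ha.kronecker hb) hne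
    (mul_comm _ _) (mul_comm _ _) (mul_comm _ _) hd₀ hd

end Kronecker

section CyclicSystem

variable {ι E : Type*} [Finite ι] [SeminormedRing E] [NormOneClass E] {σ : ι → ι} {z : ι → E}
  {x : ι → ℝ} {d s : ℝ}

lemma le_mul_add_half_of_sq_le {x u v d m : ℝ} (hd : 0 ≤ d) (hu : 0 ≤ u) (hv : 0 ≤ v)
    (hum : u ≤ m) (hvm : v ≤ m) (hx : x ^ 2 ≤ d ^ 2 * (u * (1 + v))) : x ≤ d * (m + 1 / 2) := by
  refine (abs_le_of_sq_le_sq' ?_ (mul_nonneg hd (by linarith))).2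
  calc x ^ 2 ≤ d ^ 2 * (u * (1 + v)) := hx
    _ ≤ d ^ 2 * (m * (1 + m)) := by gcongr; exact hu.trans hum
    _ ≤ (d * (m + 1 / 2)) ^ 2 := by nlinarith [sq_nonneg d]

-- Maximum principle: the estimates are applied at an index where `‖z i‖` is largest.
lemma norm_le_four_thirds_of_cyclic (hs : 0 < s) (hd : 0 ≤ d) (hds : 18 * d ≤ s)
    (hz : ∀ i, s * ‖z i - 1‖ ≤ d * (‖z i‖ + 1) + 2 * x i)
    (hx : ∀ i, x i ^ 2 ≤ d ^ 2 * (‖z i‖ * (1 + ‖z (σ i)‖))) (i : ι) : ‖z i‖ ≤ 4 / 3 := by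
  have : Nonempty ι := ⟨i⟩
  obtain ⟨j, hj⟩ := Finite.exists_max fun i => ‖z i‖
  refine (hj i).trans ?_
  have hxj := le_mul_add_half_of_sq_le hd (norm_nonneg _) (norm_nonneg _) le_rfl (hj (σ j)) (hx j)
  have hdev : ‖z j‖ - 1 ≤ ‖z j - 1‖ := by simpa using norm_sub_norm_le (z j) 1
  nlinarith [hz j, mul_le_mul_of_nonneg_left hdev hs.le, norm_nonneg (z j)]

lemma le_mul_of_cyclic (hs : 0 < s) (hd : 0 ≤ d) (hds : 18 * d ≤ s)
    (hz : ∀ i, s * ‖z i - 1‖ ≤ d * (‖z i‖ + 1) + 2 * x i)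
    (hx : ∀ i, x i ^ 2 ≤ d ^ 2 * (‖z i‖ * (1 + ‖z (σ i)‖))) (i : ι) : x i ≤ 11 / 6 * d := by
  have hbound := norm_le_four_thirds_of_cyclic hs hd hds hz hx
  linarith [le_mul_add_half_of_sq_le hd (norm_nonneg _) (norm_nonneg _) (hbound i)
    (hbound (σ i)) (hx i)]

lemma norm_sub_one_le_of_cyclic (hs : 0 < s) (hd : 0 ≤ d) (hds : 18 * d ≤ s)
    (hz : ∀ i, s * ‖z i - 1‖ ≤ d * (‖z i‖ + 1) + 2 * x i)
    (hx : ∀ i, x i ^ 2 ≤ d ^ 2 * (‖z i‖ * (1 + ‖z (σ i)‖))) (i : ι) :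
    ‖z i - 1‖ ≤ 6 * (d / s) := by
  have hx' := le_mul_of_cyclic hs hd hds hz hx i
  have hz' := norm_le_four_thirds_of_cyclic hs hd hds hz hx i
  rw [← mul_div_assoc, le_div_iff₀' hs]
  nlinarith [hz i]

end CyclicSystem

section Domino

open scoped Matrix.Norms.Elementwise

variable {t1 t2 t3 t4 d s : ℝ} {a b : Matrix (Fin 3) (Fin 3) ℂ}

lemma kp_e3_e3 (k l : Fin 3) : kp (e3 k) (e3 l) = Pi.single (k, l) 1 := by
  ext p
  simp [kp, e3, Pi.single_apply, Prod.ext_iff, ← ite_and, and_comm]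

lemma rotated_fst_eq_kp (t : ℝ) (r k l : Fin 3) : rotated t (r, k) (r, l) =
    kp (e3 r) fun m => (Real.cos t : ℂ) * e3 k m + (Real.sin t : ℂ) * e3 l m := by
  rw [rotated, ← kp_e3_e3, ← kp_e3_e3]
  ext p
  simp only [kp, Pi.add_apply, Pi.smul_apply, smul_eq_mul]
  ring

lemma rotated_snd_eq_kp (t : ℝ) (k l r : Fin 3) : rotated t (k, r) (l, r) =
    kp (fun m => (Real.cos t : ℂ) * e3 k m + (Real.sin t : ℂ) * e3 l m) (e3 r) := by
  rw [rotated, ← kp_e3_e3, ← kp_e3_e3]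
  ext p
  simp only [kp, Pi.add_apply, Pi.smul_apply, smul_eq_mul]
  ring

lemma rotDomino_eq (t1 t2 t3 t4 : ℝ) :
    rotDomino t1 t2 t3 t4 =
      ![Pi.single (1, 1) 1,
        rotated t1 (0, 0) (0, 1), rotated (t1 + Real.pi / 2) (0, 0) (0, 1),
        rotated t2 (2, 1) (2, 2), rotated (t2 + Real.pi / 2) (2, 1) (2, 2),
        rotated t3 (1, 0) (2, 0), rotated (t3 + Real.pi / 2) (1, 0) (2, 0),
        rotated t4 (0, 2) (1, 2), rotated (t4 + Real.pi / 2) (0, 2) (1, 2)] := by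
  simp only [rotDomino, ← kp_e3_e3, rotated_fst_eq_kp, rotated_snd_eq_kp,
    Real.cos_add_pi_div_two, Real.sin_add_pi_div_two, Complex.ofReal_neg]

lemma isTile_rotDomino_center : IsTile (rotDomino t1 t2 t3 t4) {0} {(1, 1)} :=
  isTile_singleton (by rw [rotDomino_eq]; rfl)

lemma isTile_rotDomino_first : IsTile (rotDomino t1 t2 t3 t4) {1, 2} {(0, 0), (0, 1)} :=
  isTile_pair (t := t1) (by decide) (by decide) (by rw [rotDomino_eq]; rfl)
    (by rw [rotDomino_eq]; rfl)

lemma isTile_rotDomino_second : IsTile (rotDomino t1 t2 t3 t4) {3, 4} {(2, 1), (2, 2)} :=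
  isTile_pair (t := t2) (by decide) (by decide) (by rw [rotDomino_eq]; rfl)
    (by rw [rotDomino_eq]; rfl)

lemma isTile_rotDomino_third : IsTile (rotDomino t1 t2 t3 t4) {5, 6} {(1, 0), (2, 0)} :=
  isTile_pair (t := t3) (by decide) (by decide) (by rw [rotDomino_eq]; rfl)
    (by rw [rotDomino_eq]; rfl)

lemma isTile_rotDomino_fourth : IsTile (rotDomino t1 t2 t3 t4) {7, 8} {(0, 2), (1, 2)} :=
  isTile_pair (t := t4) (by decide) (by decide) (by rw [rotDomino_eq]; rfl)
    (by rw [rotDomino_eq]; rfl)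

/-- The four outer diagonal entries of `a` and `b` in the order in which the pinwheel of dominoes
visits them. The angle `θ₄, θ₁, θ₃, θ₂` respectively ties them to the central entries. -/
def outerDiag (a b : Matrix (Fin 3) (Fin 3) ℂ) : Fin 4 → ℂ := ![a 0 0, b 0 0, a 2 2, b 2 2]

/-- The off-diagonal entries of `a` and `b` linking the entries of `outerDiag a b` to the central
diagonal entries. -/
def centerLink (a b : Matrix (Fin 3) (Fin 3) ℂ) : Fin 4 → ℂ := ![a 0 1, b 0 1, a 1 2, b 1 2]

lemma norm_centerLink_sq_le (ha : a.PosSemidef) (hb : b.PosSemidef) (ha1 : a 1 1 = 1)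
    (hb1 : b 1 1 = 1) (hd : DisturbanceLE (rotDomino t1 t2 t3 t4) (a ⊗ₖ b) d) (i : Fin 4) :
    ‖centerLink a b i‖ ^ 2 ≤
      d ^ 2 * (‖outerDiag a b i‖ * (1 + ‖outerDiag a b (i + 1)‖)) := by
  have hM := ha.kronecker hb
  fin_cases i
  · have h := isTile_rotDomino_first.norm_apply_sq_le isTile_rotDomino_center (by decide) hM hd
      (p := (0, 1)) (q := (1, 1)) (by decide) (by decide)
    simpa [outerDiag, centerLink, ha1, hb1, mul_one_add, add_comm] using h
  · have h := isTile_rotDomino_third.norm_apply_sq_le isTile_rotDomino_center (by decide) hM hd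
      (p := (1, 0)) (q := (1, 1)) (by decide) (by decide)
    simpa [outerDiag, centerLink, ha1, hb1, mul_one_add, mul_comm] using h
  · have h := isTile_rotDomino_center.norm_apply_sq_le isTile_rotDomino_second (by decide) hM hd
      (p := (1, 1)) (q := (2, 1)) (by decide) (by decide)
    simpa [outerDiag, centerLink, ha1, hb1, mul_one_add] using h
  · have h := isTile_rotDomino_center.norm_apply_sq_le isTile_rotDomino_fourth (by decide) hM hd
      (p := (1, 1)) (q := (1, 2)) (by decide) (by decide)
    simpa [outerDiag, centerLink, ha1, hb1, one_add_mul, mul_one_add, mul_comm, add_comm] using h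

lemma mul_norm_outerDiag_sub_one_le (ha : a.PosSemidef) (hb : b.PosSemidef) (ha1 : a 1 1 = 1)
    (hb1 : b 1 1 = 1) (hd₀ : 0 ≤ d) (hd : DisturbanceLE (rotDomino t1 t2 t3 t4) (a ⊗ₖ b) d)
    (hne : ∀ i, compression (rotDomino t1 t2 t3 t4) (a ⊗ₖ b) i i ≠ 0)
    (hs1 : s ≤ |Real.sin (2 * t1)|) (hs2 : s ≤ |Real.sin (2 * t2)|)
    (hs3 : s ≤ |Real.sin (2 * t3)|) (hs4 : s ≤ |Real.sin (2 * t4)|) (i : Fin 4) :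
    s * ‖outerDiag a b i - 1‖ ≤ d * (‖outerDiag a b i‖ + 1) + 2 * ‖centerLink a b i‖ := by
  have hi (k : Fin 9) : rotDomino t1 t2 t3 t4 k = _ := congrFun (rotDomino_eq t1 t2 t3 t4) k
  fin_cases i
  · have h := abs_sin_two_mul_mul_norm_sub_le_left (i := 7) (j := 8) (k := 0) (l := 1)
      (by decide) (by decide) (hi 7) (hi 8) ha hb (hne 7) hd₀ hd
    rw [ha1, norm_sub_rev, norm_one] at h
    exact (mul_le_mul_of_nonneg_right hs4 (norm_nonneg _)).trans h
  · have h := abs_sin_two_mul_mul_norm_sub_le_right (i := 1) (j := 2) (k := 0) (l := 1)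
      (by decide) (by decide) (hi 1) (hi 2) ha hb (hne 1) hd₀ hd
    rw [hb1, norm_sub_rev, norm_one] at h
    exact (mul_le_mul_of_nonneg_right hs1 (norm_nonneg _)).trans h
  · have h := abs_sin_two_mul_mul_norm_sub_le_left (i := 5) (j := 6) (k := 1) (l := 2)
      (by decide) (by decide) (hi 5) (hi 6) ha hb (hne 5) hd₀ hd
    rw [ha1, norm_one, add_comm 1] at h
    exact (mul_le_mul_of_nonneg_right hs3 (norm_nonneg _)).trans h
  · have h := abs_sin_two_mul_mul_norm_sub_le_right (i := 3) (j := 4) (k := 1) (l := 2)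
      (by decide) (by decide) (hi 3) (hi 4) ha hb (hne 3) hd₀ hd
    rw [hb1, norm_one, add_comm 1] at h
    exact (mul_le_mul_of_nonneg_right hs2 (norm_nonneg _)).trans h

lemma norm_left_corner_sq_le (ha : a.PosSemidef) (hb : b.PosSemidef)
    (hb1 : b 1 1 = 1) (hd : DisturbanceLE (rotDomino t1 t2 t3 t4) (a ⊗ₖ b) d) :
    ‖a 0 2‖ ^ 2 ≤ d ^ 2 * ((‖a 0 0‖ * (‖b 0 0‖ + 1)) * (‖a 2 2‖ * (1 + ‖b 2 2‖))) := by
  have h := isTile_rotDomino_first.norm_apply_sq_le isTile_rotDomino_second (by decide)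
    (ha.kronecker hb) hd (p := (0, 1)) (q := (2, 1)) (by decide) (by decide)
  simpa [hb1, mul_add] using h

lemma norm_right_corner_sq_le (ha : a.PosSemidef) (hb : b.PosSemidef)
    (ha1 : a 1 1 = 1) (hd : DisturbanceLE (rotDomino t1 t2 t3 t4) (a ⊗ₖ b) d) :
    ‖b 0 2‖ ^ 2 ≤ d ^ 2 * (((1 + ‖a 2 2‖) * ‖b 0 0‖) * ((‖a 0 0‖ + 1) * ‖b 2 2‖)) := by
  have h := isTile_rotDomino_third.norm_apply_sq_le isTile_rotDomino_fourth (by decide)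
    (ha.kronecker hb) hd (p := (1, 0)) (q := (1, 2)) (by decide) (by decide)
  simpa [ha1, add_mul] using h

lemma le_four_mul_of_sq_le {x d u v u' v' : ℝ} (hd : 0 ≤ d) (hu : u ∈ Set.Icc 0 (4 / 3))
    (hv : v ∈ Set.Icc 0 (4 / 3)) (hu' : u' ∈ Set.Icc 0 (4 / 3)) (hv' : v' ∈ Set.Icc 0 (4 / 3))
    (hx : x ^ 2 ≤ d ^ 2 * (u * (1 + v) * (u' * (1 + v')))) : x ≤ 4 * d := by
  refine (abs_le_of_sq_le_sq' ?_ (by positivity)).2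
  have := hu.1; have := hv.1; have := hu'.1; have := hv'.1
  calc x ^ 2 ≤ d ^ 2 * (u * (1 + v) * (u' * (1 + v'))) := hx
    _ ≤ d ^ 2 * (4 / 3 * (1 + 4 / 3) * (4 / 3 * (1 + 4 / 3))) := by
      gcongr
      exacts [hu.2, hv.2, hu'.2, hv'.2]
    _ ≤ (4 * d) ^ 2 := by linarith [sq_nonneg d]

lemma norm_sub_one_le_of_disturbanceLE (ha : a.PosSemidef) (hb : b.PosSemidef) (ha1 : a 1 1 = 1)
    (hb1 : b 1 1 = 1) (hd₀ : 0 ≤ d) (hd : DisturbanceLE (rotDomino t1 t2 t3 t4) (a ⊗ₖ b) d)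
    (hne : ∀ i, compression (rotDomino t1 t2 t3 t4) (a ⊗ₖ b) i i ≠ 0)
    (hs : 0 < s) (hds : 18 * d ≤ s)
    (hs1 : s ≤ |Real.sin (2 * t1)|) (hs2 : s ≤ |Real.sin (2 * t2)|)
    (hs3 : s ≤ |Real.sin (2 * t3)|) (hs4 : s ≤ |Real.sin (2 * t4)|) :
    ‖a - 1‖ ≤ 6 * (d / s) ∧ ‖b - 1‖ ≤ 6 * (d / s) := by
  have hlink := norm_centerLink_sq_le ha hb ha1 hb1 hd
  have hdiag := mul_norm_outerDiag_sub_one_le ha hb ha1 hb1 hd₀ hd hne hs1 hs2 hs3 hs4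
  have hz := norm_sub_one_le_of_cyclic hs hd₀ hds hdiag hlink
  have hm (i : Fin 4) : ‖outerDiag a b i‖ ∈ Set.Icc 0 (4 / 3) :=
    ⟨norm_nonneg _, norm_le_four_thirds_of_cyclic hs hd₀ hds hdiag hlink i⟩
  have hds' : d ≤ d / s := le_div_self hd₀ hs (hs1.trans (Real.abs_sin_le_one _))
  have hx (i : Fin 4) : ‖centerLink a b i‖ ≤ 6 * (d / s) :=
    (le_mul_of_cyclic hs hd₀ hds hdiag hlink i).trans (by linarith)
  have hca : ‖a 0 2‖ ≤ 4 * d := le_four_mul_of_sq_le hd₀ (hm 0) (hm 1) (hm 2) (hm 3) <|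
    (norm_left_corner_sq_le ha hb hb1 hd).trans_eq (by simp [outerDiag, add_comm])
  have hcb : ‖b 0 2‖ ≤ 4 * d := le_four_mul_of_sq_le hd₀ (hm 1) (hm 2) (hm 3) (hm 0) <|
    (norm_right_corner_sq_le ha hb ha1 hd).trans_eq (by
      simp only [outerDiag, cons_val]; ring)
  have hε : 0 ≤ 6 * (d / s) := by positivity
  constructor
  · refine norm_le_of_isHermitian (ha.1.sub isHermitian_one) hε ?_
    simpa [Fin.forall_fin_succ, ha1, hε] using
      ⟨⟨hz 0, hx 0, hca.trans (by linarith)⟩, hx 2, hz 2⟩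
  · refine norm_le_of_isHermitian (hb.1.sub isHermitian_one) hε ?_
    simpa [Fin.forall_fin_succ, hb1, hε] using
      ⟨⟨hz 1, hx 1, hcb.trans (by linarith)⟩, hx 3, hz 3⟩

lemma apply_center_ne_zero (ha : a.PosSemidef) (hb : b.PosSemidef)
    (hne : compression (rotDomino t1 t2 t3 t4) (a ⊗ₖ b) 0 0 ≠ 0) : a 1 1 ≠ 0 ∧ b 1 1 ≠ 0 := by
  simpa using isTile_rotDomino_center.exists_apply_ne_zero (ha.kronecker hb)
    (Finset.mem_singleton_self 0) hne

lemma norm_inv_trace_smul_kronecker_sub_le_of_disturbanceLE (ha : a.PosSemidef)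
    (hb : b.PosSemidef) (hd₀ : 0 ≤ d)
    (hd : DisturbanceLE (rotDomino t1 t2 t3 t4) (a ⊗ₖ b) d)
    (hne : ∀ i, compression (rotDomino t1 t2 t3 t4) (a ⊗ₖ b) i i ≠ 0)
    (hs : 0 < s) (hds : 18 * d ≤ s)
    (hs1 : s ≤ |Real.sin (2 * t1)|) (hs2 : s ≤ |Real.sin (2 * t2)|)
    (hs3 : s ≤ |Real.sin (2 * t3)|) (hs4 : s ≤ |Real.sin (2 * t4)|) :
    ‖(a ⊗ₖ b).trace⁻¹ • (a ⊗ₖ b) - (9 : ℂ)⁻¹ • (1 : Matrix (Fin 3 × Fin 3) (Fin 3 × Fin 3) ℂ)‖ ≤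
      8 * (d / s) := by
  obtain ⟨ha1, hb1⟩ := apply_center_ne_zero ha hb (hne 0)
  set A := (a 1 1)⁻¹ • a
  set B := (b 1 1)⁻¹ • b
  set c := (a 1 1)⁻¹ * (b 1 1)⁻¹
  have hc : c ≠ 0 := mul_ne_zero (inv_ne_zero ha1) (inv_ne_zero hb1)
  have hAB : A ⊗ₖ B = c • (a ⊗ₖ b) := by
    rw [smul_kronecker, kronecker_smul, smul_smul]
  have hA : A.PosSemidef := ha.smul (inv_nonneg_of_nonneg ha.diag_nonneg)
  have hB : B.PosSemidef := hb.smul (inv_nonneg_of_nonneg hb.diag_nonneg)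
  obtain ⟨hA_le, hB_le⟩ := norm_sub_one_le_of_disturbanceLE hA hB (inv_mul_cancel₀ ha1)
    (inv_mul_cancel₀ hb1) hd₀ (hAB ▸ hd.smul c)
    (fun i => by simpa [hAB, compression_smul, hc] using hne i) hs hds hs1 hs2 hs3 hs4
  have hratio : d / s ≤ 1 / 18 := by
    rw [div_le_iff₀ hs]; linarith
  have hratio₀ : 0 ≤ d / s := by positivity
  have hη : 2 * (6 * (d / s)) / (3 * (1 - 6 * (d / s))) ≤ 6 * (d / s) := by
    rw [div_le_iff₀ (by linarith)]
    nlinarith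
  calc _ = ‖(A ⊗ₖ B).trace⁻¹ • (A ⊗ₖ B) - ((3 : ℂ)⁻¹ * 3⁻¹) •
        (1 : Matrix (Fin 3 × Fin 3) (Fin 3 × Fin 3) ℂ)‖ := by
        rw [hAB, inv_trace_smul_smul hc, ← mul_inv]; norm_num
    _ ≤ 2 * (6 * (d / s)) / (3 * (1 - 6 * (d / s))) +
        3⁻¹ * (2 * (6 * (d / s)) / (3 * (1 - 6 * (d / s)))) := by
        simpa using norm_inv_trace_smul_kronecker_sub_le hB (by linarith) hA_le hB_le
    _ ≤ 8 * (d / s) := by linarith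

end Domino

lemma sin_two_mul_le_abs_sin_two_mul {x y : ℝ} (hx : 0 < x) (hxy : x ≤ y) (hy : y ≤ Real.pi / 4) :
    Real.sin (2 * x) ≤ |Real.sin (2 * y)| :=
  (Real.sin_le_sin_of_le_of_le_pi_div_two (by linarith [Real.pi_pos]) (by linarith)
    (by linarith)).trans (le_abs_self _)

theorem stmt10_general (t1 t2 t3 t4 s : ℝ) (hs : 0 < s)
    (hs1 : s ≤ |Real.sin (2 * t1)|) (hs2 : s ≤ |Real.sin (2 * t2)|)
    (hs3 : s ≤ |Real.sin (2 * t3)|) (hs4 : s ≤ |Real.sin (2 * t4)|)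
    (a b : Matrix (Fin 3) (Fin 3) ℂ) (ha : a.PosSemidef) (hb : b.PosSemidef)
    (hnz : ∀ i, star (rotDomino t1 t2 t3 t4 i) ⬝ᵥ
      (a ⊗ₖ b).mulVec (rotDomino t1 t2 t3 t4 i) ≠ 0) :
    maxEntry (((a ⊗ₖ b).trace)⁻¹ • (a ⊗ₖ b) -
        ((9 : ℂ))⁻¹ • (1 : Matrix (Fin 3 × Fin 3) (Fin 3 × Fin 3) ℂ)) ≤
      18 / s * disturbance (rotDomino t1 t2 t3 t4) a b := by
  set δ := disturbance (rotDomino t1 t2 t3 t4) a b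
  have hδ : 0 ≤ δ := disturbance_nonneg _ a b
  rw [maxEntry_eq_norm, div_mul_eq_mul_div]
  obtain hsmall | hlarge := le_total (18 * δ) s
  · refine (norm_inv_trace_smul_kronecker_sub_le_of_disturbanceLE ha hb hδ
      (disturbanceLE_disturbance ha hb hnz) hnz hs hsmall hs1 hs2 hs3 hs4).trans ?_
    rw [mul_div_assoc]
    gcongr
    norm_num
  · have htr : (a ⊗ₖ b).trace ≠ 0 := by
      obtain ⟨ha1, hb1⟩ := apply_center_ne_zero ha hb (hnz 0)
      rw [trace_kronecker]
      exact mul_ne_zero (trace_ne_zero_of_posSemidef ha ha1) (trace_ne_zero_of_posSemidef hb hb1)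
    calc _ ≤ (1 : ℝ) := by
          simpa using norm_inv_trace_smul_sub_smul_one_le_one (c := 9⁻¹) (ha.kronecker hb) htr
            (by norm_num) (by norm_num)
      _ ≤ 18 * δ / s := (one_le_div hs).mpr hlarge

/-- The rotated domino basis `S₃(θ₁,θ₂,θ₃,θ₄)` with
`0 < θᵢ ≤ π/4` is `(C / sin 2θ)`-rigid, where `θ = min θᵢ` and
`C = 6(1 + 6√2 + 2√(3(6 + √2))) ≤ 114`. -/
theorem stmt10 (t1 t2 t3 t4 : ℝ)
    (h1 : 0 < t1 ∧ t1 ≤ Real.pi / 4) (h2 : 0 < t2 ∧ t2 ≤ Real.pi / 4)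
    (h3 : 0 < t3 ∧ t3 ≤ Real.pi / 4) (h4 : 0 < t4 ∧ t4 ≤ Real.pi / 4)
    (th : ℝ) (hth : th = min (min t1 t2) (min t3 t4))
    (C : ℝ) (hC : C = 6 * (1 + 6 * Real.sqrt 2 + 2 * Real.sqrt (3 * (6 + Real.sqrt 2))))
    (a b : Matrix (Fin 3) (Fin 3) ℂ) (ha : a.PosSemidef) (hb : b.PosSemidef)
    (hnz : ∀ i, star (rotDomino t1 t2 t3 t4 i) ⬝ᵥ
      (a ⊗ₖ b).mulVec (rotDomino t1 t2 t3 t4 i) ≠ 0) :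
    maxEntry (((a ⊗ₖ b).trace)⁻¹ • (a ⊗ₖ b) -
        ((9 : ℂ))⁻¹ • (1 : Matrix (Fin 3 × Fin 3) (Fin 3 × Fin 3) ℂ)) ≤
      (C / Real.sin (2 * th)) * disturbance (rotDomino t1 t2 t3 t4) a b := by
  have hpos : 0 < th := by simp [hth, h1.1, h2.1, h3.1, h4.1]
  obtain ⟨⟨hle1, hle2⟩, hle3, hle4⟩ : (th ≤ t1 ∧ th ≤ t2) ∧ th ≤ t3 ∧ th ≤ t4 := by
    simpa only [le_min_iff] using hth.le
  have hsin : 0 < Real.sin (2 * th) :=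
    Real.sin_pos_of_pos_of_lt_pi (by linarith) (by linarith [h1.2, Real.pi_pos])
  have hδ := disturbance_nonneg (rotDomino t1 t2 t3 t4) a b
  have hC_ge : 18 ≤ C := by
    have hsqrt : 1 ≤ √2 := Real.one_le_sqrt.mpr one_le_two
    linarith [Real.sqrt_nonneg (3 * (6 + √2))]
  refine (stmt10_general t1 t2 t3 t4 (Real.sin (2 * th)) hsin
    (sin_two_mul_le_abs_sin_two_mul hpos hle1 h1.2) (sin_two_mul_le_abs_sin_two_mul hpos hle2 h2.2)
    (sin_two_mul_le_abs_sin_two_mul hpos hle3 h3.2) (sin_two_mul_le_abs_sin_two_mul hpos hle4 h4.2)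
    a b ha hb hnz).trans ?_
  gcongr
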